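/- arXiv:2112.06659 — 2 statements merged into one kernel-verified Lean document; each statement's English description precedes it below -/
import Mathlib

section
/- Let F be a union-closed family on n elements with m sets and suppose H(F) = 2. Then for every element x ∈ {1, …, n}, the number of sets A ∈ π₁ with x ∉ A is at most 1. -/
/-!
In a union-closed family whose union contains `x`, every member missing `x` lies strictly below the
largest member, so these members form a subfamily of strictly smaller height. This subfamily is
again union-closed, and a union-closed family of height at most one has at most one member, because
`A ⊂ A ∪ B` would already be a chain of two members.
-/

open Finset

/-- The minimal members of a family of finite sets: those `A` such that no
member `B ≠ A` satisfies `B ⊆ A`. -/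
def minimalSets (G : Finset (Finset ℕ)) : Finset (Finset ℕ) :=
  G.filter fun A => ∀ B ∈ G, B ≠ A → ¬ B ⊆ A

/-- The family remaining after removing the first `i` layers of the height
decomposition. -/
def rest (F : Finset (Finset ℕ)) : ℕ → Finset (Finset ℕ)
  | 0 => F
  | i + 1 => rest F i \ minimalSets (rest F i)

/-- The `i`-th layer `π_i` of the height decomposition (meaningful for `i ≥ 1`):
`π_{i+1}` is the family of minimal members of `F \ (π₁ ∪ ⋯ ∪ π_i)`. -/
def layer (F : Finset (Finset ℕ)) : ℕ → Finset (Finset ℕ)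
  | 0 => ∅
  | i + 1 => minimalSets (rest F i)

/-- The height number `H(F)`: the least `H` with `F = π₁ ∪ ⋯ ∪ π_H`,
equivalently the least `H` with `rest F H = ∅`. -/
noncomputable def height (F : Finset (Finset ℕ)) : ℕ :=
  sInf {H : ℕ | rest F H = ∅}

/-- `F` is a union-closed family on `n` elements with `m` sets: a finite family
of `m` distinct nonempty finite sets whose union is `{1, …, n}`, closed under
unions. -/
def IsUC (F : Finset (Finset ℕ)) (n m : ℕ) : Prop :=
  F.Nonempty ∧ F.card = m ∧ (∀ A ∈ F, A.Nonempty) ∧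
    F.sup id = Finset.Icc 1 n ∧ ∀ A ∈ F, ∀ B ∈ F, A ∪ B ∈ F

/-- The tent `T(A)` of a set `A` of level `i ≥ 2`: the family
`{A} ∪ {B ∈ π_{i−1} : B ⊆ A}`. -/
def tent (F : Finset (Finset ℕ)) (i : ℕ) (A : Finset ℕ) : Finset (Finset ℕ) :=
  insert A ((layer F (i - 1)).filter fun B => B ⊆ A)

/-- `F` is separating: every pair of distinct elements of `{1, …, n}` is
separated by some member of `F`. -/
def Separating (F : Finset (Finset ℕ)) (n : ℕ) : Prop :=
  ∀ x ∈ Finset.Icc 1 n, ∀ y ∈ Finset.Icc 1 n, x ≠ y →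
    ∃ A ∈ F, (x ∈ A ∧ y ∉ A) ∨ (y ∈ A ∧ x ∉ A)

section Height

variable {F G : Finset (Finset ℕ)} {A B T : Finset ℕ} {i : ℕ}

lemma mem_minimalSets : A ∈ minimalSets G ↔ Minimal (· ∈ G) A := by
  simp only [minimalSets, mem_filter, minimal_iff]
  grind

lemma rest_succ_subset : rest F (i + 1) ⊆ rest F i :=
  sdiff_subset

lemma mem_rest_succ : A ∈ rest F (i + 1) ↔ A ∈ rest F i ∧ ∃ B ∈ rest F i, B ⊂ A := by
  rw [rest, mem_sdiff, mem_minimalSets]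
  refine and_congr_right fun hA => ?_
  rw [not_minimal_iff_exists_lt hA]
  exact exists_congr fun _ => and_comm

lemma mem_rest_succ_of_ssubset (hA : A ∈ rest F i) (hB : B ∈ F) (hAB : A ⊂ B) :
    B ∈ rest F (i + 1) := by
  induction i with
  | zero => exact mem_rest_succ.2 ⟨hB, A, hA, hAB⟩
  | succ i ih => exact mem_rest_succ.2 ⟨ih (rest_succ_subset hA), A, hA, hAB⟩

lemma rest_subset_rest (hGF : G ⊆ F) : rest G i ⊆ rest F i := by
  induction i with
  | zero => exact hGF
  | succ i ih =>
    intro A hA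
    obtain ⟨hA, B, hB, hBA⟩ := mem_rest_succ.1 hA
    exact mem_rest_succ.2 ⟨ih hA, B, ih hB, hBA⟩

lemma rest_antitone : Antitone (rest F) :=
  antitone_nat_of_succ_le fun _ => rest_succ_subset

lemma le_card_of_mem_rest (hA : A ∈ rest F i) : i ≤ #A := by
  induction i generalizing A with
  | zero => exact Nat.zero_le _
  | succ i ih =>
    obtain ⟨-, B, hB, hBA⟩ := mem_rest_succ.1 hA
    exact (ih hB).trans_lt (card_lt_card hBA)

lemma exists_rest_eq_empty (F : Finset (Finset ℕ)) : ∃ i, rest F i = ∅ := by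
  refine ⟨F.sup card + 1, eq_empty_of_forall_notMem fun A hA => ?_⟩
  have hAF : A ∈ F := rest_antitone (Nat.zero_le _) hA
  exact (le_card_of_mem_rest hA).not_gt (Nat.lt_succ_of_le (le_sup hAF))

lemma height_le_iff_rest_eq_empty : height F ≤ i ↔ rest F i = ∅ := by
  refine ⟨fun h => ?_, fun h => Nat.sInf_le h⟩
  have hrest : rest F (height F) = ∅ := Nat.sInf_mem (exists_rest_eq_empty F)
  exact subset_empty.1 (hrest ▸ rest_antitone h)

lemma lt_height_iff_rest_nonempty : i < height F ↔ (rest F i).Nonempty := by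
  rw [← not_le, height_le_iff_rest_eq_empty, nonempty_iff_ne_empty]

lemma height_lt_height_of_forall_ssubset (hGF : G ⊆ F) (hT : T ∈ F) (hGT : ∀ A ∈ G, A ⊂ T) :
    height G < height F := by
  rw [lt_height_iff_rest_nonempty]
  refine ⟨T, ?_⟩
  cases hi : height G with
  | zero => exact hT
  | succ i =>
    obtain ⟨A, hA⟩ : (rest G i).Nonempty := lt_height_iff_rest_nonempty.1 (by lia)
    have hAG : A ∈ G := rest_antitone (Nat.zero_le i) hA
    exact mem_rest_succ_of_ssubset (rest_subset_rest hGF hA) hT (hGT A hAG)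

end Height

section UnionClosed

variable {F : Finset (Finset ℕ)} {x : ℕ}

lemma card_le_one_of_supClosed_of_height_le_one (hF : SupClosed (F : Set (Finset ℕ)))
    (h : height F ≤ 1) : #F ≤ 1 := by
  have eq_union {A B : Finset ℕ} (hA : A ∈ F) (hB : B ∈ F) : A = A ∪ B := by
    by_contra hne
    have hmem : A ∪ B ∈ rest F 1 :=
      mem_rest_succ_of_ssubset hA (hF hA hB) (subset_union_left.ssubset_of_ne hne)
    simp [height_le_iff_rest_eq_empty.1 h] at hmem
  refine card_le_one.2 fun A hA B hB => ?_
  calc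
    A = A ∪ B := eq_union hA hB
    _ = B ∪ A := union_comm A B
    _ = B := (eq_union hB hA).symm

lemma supClosed_filter_notMem (hF : SupClosed (F : Set (Finset ℕ))) (x : ℕ) :
    SupClosed (({A ∈ F | x ∉ A} : Finset (Finset ℕ)) : Set (Finset ℕ)) := by
  intro A hA B hB
  obtain ⟨hAF, hxA⟩ := mem_filter.1 (mem_coe.1 hA)
  obtain ⟨hBF, hxB⟩ := mem_filter.1 (mem_coe.1 hB)
  exact mem_coe.2 (mem_filter.2 ⟨hF hAF hBF, notMem_union.2 ⟨hxA, hxB⟩⟩)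

lemma height_filter_notMem_lt (hF : SupClosed (F : Set (Finset ℕ))) (hx : x ∈ F.sup id) :
    height {A ∈ F | x ∉ A} < height F := by
  have hne : F.Nonempty := by
    obtain ⟨A, hA, -⟩ := mem_sup.1 hx
    exact ⟨A, hA⟩
  have hsup : F.sup id ∈ F := by
    rw [← sup'_eq_sup hne]
    exact hF.finsetSup'_mem hne fun _ hA => hA
  refine height_lt_height_of_forall_ssubset (filter_subset _ F) hsup fun A hA => ?_
  obtain ⟨hAF, hxA⟩ := mem_filter.1 hA
  exact ssubset_iff_exists_subset_erase.2 ⟨x, hx, subset_erase.2 ⟨le_sup (f := id) hAF, hxA⟩⟩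

end UnionClosed

/-- If `H(F) = 2`, then for every element `x ∈ {1, …, n}` the
number of sets of `π₁` not containing `x` is at most `1`. -/
theorem height_eq_two_missing_le_one (n m : ℕ) (F : Finset (Finset ℕ))
    (hF : IsUC F n m) (h : height F = 2) :
    ∀ x ∈ Finset.Icc 1 n, ((layer F 1).filter fun A => x ∉ A).card ≤ 1 := by
  obtain ⟨-, -, -, hsup, hunion⟩ := hF
  have hclosed : SupClosed (F : Set (Finset ℕ)) := fun A hA B hB => hunion A hA B hB
  intro x hx
  have hlt : height {A ∈ F | x ∉ A} < 2 := h ▸ height_filter_notMem_lt hclosed (hsup ▸ hx)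
  have hlayer : layer F 1 ⊆ F := filter_subset _ F
  calc
    #{A ∈ layer F 1 | x ∉ A} ≤ #{A ∈ F | x ∉ A} := card_le_card (filter_subset_filter _ hlayer)
    _ ≤ 1 := card_le_one_of_supClosed_of_height_le_one
      (supClosed_filter_notMem hclosed x) (Nat.le_of_lt_succ hlt)
end

section
/- Let F be a union-closed family on n elements with m sets. If H(F) ≥ n − 1, then there exists an element x ∈ {1, …, n} that belongs to more than m/2 of the sets of F. -/
open Finset

/-!
Each layer removed from `F` raises the least cardinality of the remaining sets by at least one, so
a member `A` of least cardinality satisfies `|A| + H(F) ≤ n + 1`. Hence `H(F) ≥ n - 1` yields a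
member `{a, b}`, possibly with `a = b`. Adding `{a, b}` embeds the members avoiding `a` and `b`
into those containing both; as `{a, b}` itself is missed, the latter are strictly more numerous.
By inclusion–exclusion the degrees of `a` and `b` then add up to more than `m`.
-/

section Height

variable {F : Finset (Finset ℕ)} {A : Finset ℕ} {i k : ℕ}

lemma rest_subset (F : Finset (Finset ℕ)) (i : ℕ) : rest F i ⊆ F := by
  induction i with
  | zero => exact Subset.rfl
  | succ i ih => exact sdiff_subset.trans ih

lemma exists_ssubset_of_mem_rest_succ (hA : A ∈ rest F (i + 1)) : ∃ B ∈ rest F i, B ⊂ A := by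
  obtain ⟨hA, hA_not_minimal⟩ := mem_sdiff.mp hA
  by_contra! h
  exact hA_not_minimal <| mem_filter.mpr
    ⟨hA, fun B hB hne hBA ↦ h B hB (hBA.ssubset_of_ne hne)⟩

lemma add_le_card_of_mem_rest (hF : ∀ B ∈ F, k ≤ #B) (hA : A ∈ rest F i) : i + k ≤ #A := by
  induction i generalizing A with
  | zero => simpa using hF A hA
  | succ i ih =>
    obtain ⟨B, hB, hBA⟩ := exists_ssubset_of_mem_rest_succ hA
    have hB_card := ih hB
    have hBA_card := card_lt_card hBA
    lia

lemma exists_card_add_height_le (hF : F.Nonempty) :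
    ∃ A ∈ F, #A + height F ≤ #(F.sup id) + 1 := by
  obtain ⟨A, hA, hA_min⟩ := exists_min_image F card hF
  have card_le {B : Finset ℕ} (hB : B ∈ F) : #B ≤ #(F.sup id) :=
    card_le_card (le_sup (f := id) hB)
  have rest_eq_empty : rest F (#(F.sup id) + 1 - #A) = ∅ :=
    eq_empty_of_forall_notMem fun B hB ↦ by
      have lower := add_le_card_of_mem_rest hA_min hB
      have upper := card_le (rest_subset F _ hB)
      lia
  have height_le : height F ≤ #(F.sup id) + 1 - #A := Nat.sInf_le rest_eq_empty
  have hA_card := card_le hA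
  exact ⟨A, hA, by lia⟩

end Height

section UnionClosed

variable {α : Type*} [DecidableEq α] {F : Finset (Finset α)}

lemma card_filter_disjoint_lt_card_filter_superset {S : Finset α}
    (hF : SupClosed (F : Set (Finset α))) (h_empty : ∅ ∉ F) (hS : S ∈ F) :
    #{A ∈ F | Disjoint A S} < #{A ∈ F | S ⊆ A} := by
  have maps_to : Set.MapsTo (· ∪ S) (↑{A ∈ F | Disjoint A S} : Set (Finset α))
      ↑(({A ∈ F | S ⊆ A} : Finset (Finset α)).erase S) := by
    intro A hA
    obtain ⟨hA, hAS⟩ := mem_filter.mp hA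
    have union_ne : A ∪ S ≠ S := by
      intro h
      obtain rfl : A = ∅ := hAS.eq_bot_of_le (union_eq_right.mp h)
      exact h_empty hA
    exact mem_erase.mpr ⟨union_ne, mem_filter.mpr ⟨hF hA hS, subset_union_right⟩⟩
  have left_inv : Set.LeftInvOn (· \ S) (· ∪ S) (↑{A ∈ F | Disjoint A S} : Set (Finset α)) :=
    fun A hA ↦ union_sdiff_cancel_right (mem_filter.mp hA).2
  calc #{A ∈ F | Disjoint A S}
      ≤ #(({A ∈ F | S ⊆ A} : Finset (Finset α)).erase S) :=
        card_le_card_of_injOn _ maps_to left_inv.injOn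
    _ < #{A ∈ F | S ⊆ A} := card_erase_lt_of_mem (mem_filter.mpr ⟨hS, Subset.rfl⟩)

lemma card_lt_card_filter_mem_add_card_filter_mem {a b : α}
    (hF : SupClosed (F : Set (Finset α))) (h_empty : ∅ ∉ F) (hab : {a, b} ∈ F) :
    #F < #{A ∈ F | a ∈ A} + #{A ∈ F | b ∈ A} := by
  have avoid_lt_both : #{A ∈ F | ¬(a ∈ A ∨ b ∈ A)} < #{A ∈ F | a ∈ A ∧ b ∈ A} := by
    simpa [insert_subset_iff] using card_filter_disjoint_lt_card_filter_superset hF h_empty hab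
  calc #F = #{A ∈ F | a ∈ A ∨ b ∈ A} + #{A ∈ F | ¬(a ∈ A ∨ b ∈ A)} :=
        (card_filter_add_card_filter_not _).symm
    _ < #{A ∈ F | a ∈ A ∨ b ∈ A} + #{A ∈ F | a ∈ A ∧ b ∈ A} := by gcongr
    _ = #{A ∈ F | a ∈ A} + #{A ∈ F | b ∈ A} := by
        rw [filter_or, filter_and, card_union_add_card_inter]

lemma exists_mem_card_lt_two_mul_card_filter_mem {S : Finset α}
    (hF : SupClosed (F : Set (Finset α))) (h_empty : ∅ ∉ F) (hS : S ∈ F) (hS_card : #S ≤ 2) :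
    ∃ x ∈ S, #F < 2 * #{A ∈ F | x ∈ A} := by
  obtain ⟨a, b, rfl⟩ : ∃ a b, S = {a, b} := by
    have hS_ne : S ≠ ∅ := ne_of_mem_of_not_mem hS h_empty
    have hS_pos : #S ≠ 0 := card_ne_zero.mpr (nonempty_iff_ne_empty.mpr hS_ne)
    obtain h | h : #S = 1 ∨ #S = 2 := by lia
    · obtain ⟨a, rfl⟩ := card_eq_one.mp h
      exact ⟨a, a, (pair_eq_singleton a).symm⟩
    · obtain ⟨a, b, -, rfl⟩ := card_eq_two.mp h
      exact ⟨a, b, rfl⟩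
  have hsum := card_lt_card_filter_mem_add_card_filter_mem hF h_empty hS
  obtain ha | hb : #F < 2 * #{A ∈ F | a ∈ A} ∨ #F < 2 * #{A ∈ F | b ∈ A} := by lia
  · exact ⟨a, by simp, ha⟩
  · exact ⟨b, by simp, hb⟩

end UnionClosed

/-- If `H(F) ≥ n − 1`, then some element of `{1, …, n}` belongs
to more than `m/2` of the sets of `F`. -/
theorem frankl_of_height_ge_pred (n m : ℕ) (F : Finset (Finset ℕ))
    (hF : IsUC F n m) (h : n - 1 ≤ height F) :
    ∃ x ∈ Finset.Icc 1 n, 2 * (F.filter fun A => x ∈ A).card > m := by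
  obtain ⟨hF_nonempty, rfl, h_nonempty, h_sup, h_union⟩ := hF
  obtain ⟨S, hS, hS_card⟩ : ∃ S ∈ F, #S ≤ 2 := by
    obtain ⟨S, hS, hS_height⟩ := exists_card_add_height_le hF_nonempty
    rw [h_sup, Nat.card_Icc] at hS_height
    exact ⟨S, hS, by lia⟩
  have h_closed : SupClosed (F : Set (Finset ℕ)) := fun A hA B hB ↦ h_union A hA B hB
  have h_empty : ∅ ∉ F := fun h ↦ not_nonempty_empty (h_nonempty ∅ h)
  obtain ⟨x, hxS, hx⟩ := exists_mem_card_lt_two_mul_card_filter_mem h_closed h_empty hS hS_card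
  have hS_subset : S ⊆ Icc 1 n := h_sup ▸ le_sup (f := id) hS
  exact ⟨x, hS_subset hxS, hx⟩
end
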